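/- (Lemma 3, equations (33) and d = a) For every real ε and all real estimates ε̂_1,…,ε̂_{K−1}: Ẽ^† R_ε Ẽ = 4^{K−1} · ∏_{ι=1}^{K−1} sin²((ε − ε̂_ι)/2) (in particular this quadratic form is real and nonnegative), and moreover Ẽ^† L^† R_ε L Ẽ = Ẽ^† R_ε Ẽ. -/

import Mathlib

open scoped BigOperators
open Matrix

/-- Steering vector `a(ε) ∈ ℂ^{n+1}` with entries `exp(j·i·ε)`, `i = 0,…,n`. -/
noncomputable def steer (n : ℕ) (ε : ℝ) : Fin (n + 1) → ℂ :=
  fun i => Complex.exp (Complex.I * ((i : ℕ) : ℂ) * (ε : ℂ))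

/-- The vector `E(η_1,…,η_m) ∈ ℂ^{m+1}` defined recursively by
`E(η_1) = (1, −exp(j·η_1))` and
`E(η_1,…,η_p) = (E(η_1,…,η_{p−1}), 0) − exp(j·η_p)·(0, E(η_1,…,η_{p−1}))`
(with base case `E() = (1)`, which reproduces the stated base case at `m = 1`). -/
noncomputable def Evec : (m : ℕ) → (Fin m → ℝ) → (Fin (m + 1) → ℂ)
  | 0, _ => fun _ => 1
  | m + 1, η => fun i =>
      Fin.snoc (α := fun _ => ℂ) (Evec m fun j => η j.castSucc) 0 i -
        Complex.exp (Complex.I * (η (Fin.last m) : ℂ)) *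
          Fin.cons (α := fun _ => ℂ) 0 (Evec m fun j => η j.castSucc) i

/-- The cyclic down-shift matrix on `ℂ^{n+1}`: `(Lv)_0 = v_n`, `(Lv)_i = v_{i−1}` for `i ≥ 1`. -/
def Lmat (n : ℕ) : Matrix (Fin (n + 1)) (Fin (n + 1)) ℂ :=
  Matrix.of fun i l => if l = i - 1 then 1 else 0

/-- Kronecker product of vectors: `(v ⊗ w)_{(i,l)} = v_i · w_l`. -/
def kron {a b : Type*} (v : a → ℂ) (w : b → ℂ) : a × b → ℂ :=
  fun p => v p.1 * w p.2

/-- `x^† y = Σ_i conj(x_i) · y_i`. -/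
noncomputable def ip {n : Type*} [Fintype n] (x y : n → ℂ) : ℂ :=
  ∑ i, (starRingEnd ℂ) (x i) * y i

/-- `x^† M y = Σ_{i,l} conj(x_i) · M_{i,l} · y_l`. -/
noncomputable def qf {n : Type*} [Fintype n] (x : n → ℂ) (M : Matrix n n ℂ) (y : n → ℂ) : ℂ :=
  ∑ i, ∑ l, (starRingEnd ℂ) (x i) * M i l * y l

/-- `E(η_1,…,η_Kp) ∈ ℂ^{Kp+1}` padded with a trailing zero, giving a vector in `ℂ^{Kp+2}`. -/
noncomputable def Epad (Kp : ℕ) (η : Fin Kp → ℝ) : Fin (Kp + 2) → ℂ :=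
  Fin.snoc (Evec Kp η) 0

/-- `u_0 = Ẽ_tx ⊗ Ẽ_rx`. -/
noncomputable def u0 (Kp : ℕ) (ηt ηr : Fin Kp → ℝ) : Fin (Kp + 2) × Fin (Kp + 2) → ℂ :=
  kron (Epad Kp ηt) (Epad Kp ηr)

/-- `u_1 = Ẽ_tx ⊗ (L·Ẽ_rx)`. -/
noncomputable def u1 (Kp : ℕ) (ηt ηr : Fin Kp → ℝ) : Fin (Kp + 2) × Fin (Kp + 2) → ℂ :=
  kron (Epad Kp ηt) ((Lmat (Kp + 1)).mulVec (Epad Kp ηr))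

/-- `u_2 = (L·Ẽ_tx) ⊗ Ẽ_rx`. -/
noncomputable def u2 (Kp : ℕ) (ηt ηr : Fin Kp → ℝ) : Fin (Kp + 2) × Fin (Kp + 2) → ℂ :=
  kron ((Lmat (Kp + 1)).mulVec (Epad Kp ηt)) (Epad Kp ηr)

/-- `u_3 = (L·Ẽ_tx) ⊗ (L·Ẽ_rx)`. -/
noncomputable def u3 (Kp : ℕ) (ηt ηr : Fin Kp → ℝ) : Fin (Kp + 2) × Fin (Kp + 2) → ℂ :=
  kron ((Lmat (Kp + 1)).mulVec (Epad Kp ηt)) ((Lmat (Kp + 1)).mulVec (Epad Kp ηr))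

/-- The noiseless auto-correlation matrix `R = Σ_{k=1}^K σ_k² A_k A_k^†`, where
`A_k = a(ε_tx,k) ⊗ a(ε_rx,k)` and `σsq k` is the power `σ_k²`. -/
noncomputable def Rmat (K : ℕ) (εtx εrx σsq : Fin K → ℝ) :
    Matrix (Fin (K + 1) × Fin (K + 1)) (Fin (K + 1) × Fin (K + 1)) ℂ :=
  Matrix.of fun p q => ∑ k, (σsq k : ℂ) *
    kron (steer K (εtx k)) (steer K (εrx k)) p *
    (starRingEnd ℂ) (kron (steer K (εtx k)) (steer K (εrx k)) q)

/-- The rank-one matrix `R_ε = a(ε) a(ε)^† ∈ ℂ^{(Kp+2)×(Kp+2)}`. -/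
noncomputable def Rsingle (Kp : ℕ) (ε : ℝ) : Matrix (Fin (Kp + 2)) (Fin (Kp + 2)) ℂ :=
  Matrix.of fun i l => steer (Kp + 1) ε i * (starRingEnd ℂ) (steer (Kp + 1) ε l)

/-- The iDEA cost `Q_tx(φ) = (u_1 − exp(j·φ)·u_3)^† R (u_1 − exp(j·φ)·u_3)`. -/
noncomputable def Qcost (Kp : ℕ) (εtx εrx σsq : Fin (Kp + 1) → ℝ)
    (ηt ηr : Fin Kp → ℝ) (φ : ℝ) : ℂ :=
  qf (u1 Kp ηt ηr - Complex.exp (Complex.I * (φ : ℂ)) • u3 Kp ηt ηr)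
    (Rmat (Kp + 1) εtx εrx σsq)
    (u1 Kp ηt ηr - Complex.exp (Complex.I * (φ : ℂ)) • u3 Kp ηt ηr)

/-- The closed-form value `4^{2K−1} · Σ_k σ_k² sin²((ε_tx,k − φ)/2) ∏_m sin²((ε_tx,k − ε̂_tx,m)/2)
∏_n sin²((ε_rx,k − ε̂_rx,n)/2)` (here `K = Kp + 1`, so `2K − 1 = 2·Kp + 1`). -/
noncomputable def Ssum (Kp : ℕ) (εtx εrx σsq : Fin (Kp + 1) → ℝ)
    (ηt ηr : Fin Kp → ℝ) (φ : ℝ) : ℝ :=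
  (4 : ℝ) ^ (2 * Kp + 1) * ∑ k, σsq k * Real.sin ((εtx k - φ) / 2) ^ 2 *
    (∏ m, Real.sin ((εtx k - ηt m) / 2) ^ 2) *
    (∏ n, Real.sin ((εrx k - ηr n) / 2) ^ 2)

/-- The `k = K` term of `Ssum`, i.e. the lower bound
`4^{2K−1} · σ_K² sin²((ε_tx,K − φ)/2) ∏_m sin²((ε_tx,K − ε̂_tx,m)/2) ∏_n sin²((ε_rx,K − ε̂_rx,n)/2)`. -/
noncomputable def Slb (Kp : ℕ) (εtx εrx σsq : Fin (Kp + 1) → ℝ)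
    (ηt ηr : Fin Kp → ℝ) (φ : ℝ) : ℝ :=
  (4 : ℝ) ^ (2 * Kp + 1) * σsq (Fin.last Kp) *
    Real.sin ((εtx (Fin.last Kp) - φ) / 2) ^ 2 *
    (∏ m, Real.sin ((εtx (Fin.last Kp) - ηt m) / 2) ^ 2) *
    (∏ n, Real.sin ((εrx (Fin.last Kp) - ηr n) / 2) ^ 2)

/-!
The pairing `x ↦ a(ε)† x` evaluates the polynomial with coefficient vector `x` at `exp (-jε)`.
Under it the recursion for `E(η_1,…,η_p)` becomes multiplication by the linear factor
`1 - exp (j(η_p - ε))`, of modulus `2 |sin ((ε - η_p) / 2)|`; as `R_ε` has rank one, its quadratic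
form is the squared modulus of the resulting product. Because `Ẽ` ends in a zero, the cyclic shift
`L` only multiplies the polynomial by its variable, hence the pairing by the unit `exp (-jε)`.
-/

section QuadraticForm

variable {m n : Type*} [Fintype m] [Fintype n]

theorem ip_eq_star_dotProduct (x y : n → ℂ) : ip x y = star x ⬝ᵥ y := rfl

theorem ip_sub_smul (x y z : n → ℂ) (c : ℂ) : ip x (y - c • z) = ip x y - c * ip x z := by
  simp only [ip_eq_star_dotProduct, dotProduct_sub, dotProduct_smul, smul_eq_mul]

theorem qf_eq_ip_mulVec (x : n → ℂ) (M : Matrix n n ℂ) (y : n → ℂ) :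
    qf x M y = ip x (M *ᵥ y) := by
  simp only [qf, ip, mulVec, dotProduct, Finset.mul_sum, mul_assoc]

theorem qf_conjTranspose_mul_mul (A : Matrix n m ℂ) (M : Matrix n n ℂ) (x y : m → ℂ) :
    qf x (Aᴴ * M * A) y = qf (A *ᵥ x) M (A *ᵥ y) := by
  simp only [qf_eq_ip_mulVec, ip_eq_star_dotProduct, star_mulVec, ← mulVec_mulVec,
    dotProduct_mulVec, vecMul_vecMul]

theorem conj_ip (x y : n → ℂ) : starRingEnd ℂ (ip x y) = ip y x :=
  (star_dotProduct y x).symm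

theorem qf_vecMulVec_star (x a b y : n → ℂ) :
    qf x (vecMulVec a (star b)) y = ip b y * ip x a := by
  rw [qf_eq_ip_mulVec, vecMulVec_mulVec, op_smul_eq_smul, ip_eq_star_dotProduct, dotProduct_smul,
    smul_eq_mul, ← ip_eq_star_dotProduct, ← ip_eq_star_dotProduct]

end QuadraticForm

theorem Rsingle_eq_vecMulVec (n : ℕ) (ε : ℝ) :
    Rsingle n ε = vecMulVec (steer (n + 1) ε) (star (steer (n + 1) ε)) := rfl

theorem qf_Rsingle_self (n : ℕ) (ε : ℝ) (x : Fin (n + 2) → ℂ) :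
    qf x (Rsingle n ε) x = ((‖ip (steer (n + 1) ε) x‖ ^ 2 : ℝ) : ℂ) := by
  rw [Rsingle_eq_vecMulVec, qf_vecMulVec_star, ← conj_ip (steer (n + 1) ε) x, Complex.mul_conj',
    Complex.ofReal_pow]

theorem steer_zero (n : ℕ) (ε : ℝ) : steer n ε 0 = 1 := by
  simp [steer]

theorem steer_castSucc (n : ℕ) (ε : ℝ) (i : Fin (n + 1)) :
    steer (n + 1) ε i.castSucc = steer n ε i := rfl

theorem steer_succ (n : ℕ) (ε : ℝ) (i : Fin (n + 1)) :
    steer (n + 1) ε i.succ = Complex.exp (Complex.I * ε) * steer n ε i := by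
  rw [steer, steer, ← Complex.exp_add, Fin.val_succ]
  congr 1
  push_cast
  ring

theorem conj_exp_I_mul_ofReal (ε : ℝ) :
    starRingEnd ℂ (Complex.exp (Complex.I * ε)) = Complex.exp (-(Complex.I * ε)) := by
  rw [← Complex.exp_conj, map_mul, Complex.conj_I, Complex.conj_ofReal, neg_mul]

theorem ip_steer_snoc (n : ℕ) (ε : ℝ) (v : Fin (n + 1) → ℂ) (c : ℂ) :
    ip (steer (n + 1) ε) (Fin.snoc (α := fun _ => ℂ) v c) =
      ip (steer n ε) v + starRingEnd ℂ (steer (n + 1) ε (Fin.last (n + 1))) * c := by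
  simp only [ip, Fin.sum_univ_castSucc (n := n + 1), Fin.snoc_castSucc, Fin.snoc_last,
    steer_castSucc]

theorem ip_steer_cons (n : ℕ) (ε : ℝ) (c : ℂ) (v : Fin (n + 1) → ℂ) :
    ip (steer (n + 1) ε) (Fin.cons (α := fun _ => ℂ) c v) =
      c + Complex.exp (-(Complex.I * ε)) * ip (steer n ε) v := by
  simp only [ip, Fin.sum_univ_succ (n := n + 1), Fin.cons_zero, Fin.cons_succ, steer_zero,
    steer_succ, map_one, one_mul, map_mul, conj_exp_I_mul_ofReal, mul_assoc, Finset.mul_sum]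

theorem Evec_succ (m : ℕ) (η : Fin (m + 1) → ℝ) :
    Evec (m + 1) η =
      Fin.snoc (α := fun _ => ℂ) (Evec m (Fin.init η)) 0 -
        Complex.exp (Complex.I * η (Fin.last m)) •
          Fin.cons (α := fun _ => ℂ) 0 (Evec m (Fin.init η)) := rfl

theorem ip_steer_Evec (m : ℕ) (η : Fin m → ℝ) (ε : ℝ) :
    ip (steer m ε) (Evec m η) = ∏ k, (1 - Complex.exp (Complex.I * (η k - ε : ℝ))) := by
  induction m with
  | zero => simp [ip, Evec, steer_zero]
  | succ m ih =>
    have exp_factor : Complex.exp (Complex.I * (η (Fin.last m) - ε : ℝ)) =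
        Complex.exp (Complex.I * η (Fin.last m)) * Complex.exp (-(Complex.I * ε)) := by
      rw [← Complex.exp_add, Complex.ofReal_sub, mul_sub, sub_eq_add_neg]
    rw [Evec_succ, ip_sub_smul, ip_steer_snoc, ip_steer_cons, ih, Fin.prod_univ_castSucc,
      exp_factor]
    simp only [Fin.init]
    ring

theorem norm_sq_one_sub_exp_I_mul_ofReal (x : ℝ) :
    ‖1 - Complex.exp (Complex.I * x)‖ ^ 2 = 4 * Real.sin (x / 2) ^ 2 := by
  rw [norm_sub_rev, Complex.norm_exp_I_mul_ofReal_sub_one, Real.norm_eq_abs, sq_abs]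
  ring

theorem norm_sq_ip_steer_Evec (m : ℕ) (η : Fin m → ℝ) (ε : ℝ) :
    ‖ip (steer m ε) (Evec m η)‖ ^ 2 = 4 ^ m * ∏ k, Real.sin ((ε - η k) / 2) ^ 2 := by
  have sin_sq_symm (k : Fin m) :
      Real.sin ((η k - ε) / 2) ^ 2 = Real.sin ((ε - η k) / 2) ^ 2 := by
    rw [← neg_sub ε, neg_div, Real.sin_neg, neg_sq]
  simp only [ip_steer_Evec, norm_prod, ← Finset.prod_pow, norm_sq_one_sub_exp_I_mul_ofReal,
    Finset.prod_mul_distrib, Finset.prod_const, Finset.card_fin, sin_sq_symm]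

theorem Lmat_mulVec_apply (n : ℕ) (v : Fin (n + 1) → ℂ) (i : Fin (n + 1)) :
    (Lmat n *ᵥ v) i = v (i - 1) := by
  simp [mulVec, dotProduct, Lmat]

theorem Lmat_mulVec_snoc (n : ℕ) (v : Fin n → ℂ) (c : ℂ) :
    Lmat n *ᵥ Fin.snoc (α := fun _ => ℂ) v c = Fin.cons (α := fun _ => ℂ) c v := by
  ext i
  simp only [Lmat_mulVec_apply, Fin.snoc_eq_cons_rotate, finRotate_apply, sub_add_cancel]

theorem ip_steer_Epad (m : ℕ) (η : Fin m → ℝ) (ε : ℝ) :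
    ip (steer (m + 1) ε) (Epad m η) = ip (steer m ε) (Evec m η) := by
  rw [Epad, ip_steer_snoc, mul_zero, add_zero]

theorem ip_steer_Lmat_mulVec_Epad (m : ℕ) (η : Fin m → ℝ) (ε : ℝ) :
    ip (steer (m + 1) ε) (Lmat (m + 1) *ᵥ Epad m η) =
      Complex.exp (-(Complex.I * ε)) * ip (steer m ε) (Evec m η) := by
  rw [Epad, Lmat_mulVec_snoc, ip_steer_cons, zero_add]

theorem norm_ip_steer_Lmat_mulVec_Epad (m : ℕ) (η : Fin m → ℝ) (ε : ℝ) :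
    ‖ip (steer (m + 1) ε) (Lmat (m + 1) *ᵥ Epad m η)‖ = ‖ip (steer (m + 1) ε) (Epad m η)‖ := by
  rw [ip_steer_Lmat_mulVec_Epad, ip_steer_Epad, norm_mul, ← conj_exp_I_mul_ofReal,
    Complex.norm_conj, Complex.norm_exp_I_mul_ofReal, one_mul]

/-- Lemma 3, eq. (33) and d = a: for every real ε and estimates ε̂_1,…,ε̂_{K−1},
Ẽ^† R_ε Ẽ = 4^{K−1} · ∏_ι sin²((ε − ε̂_ι)/2) (in particular real and nonnegative), and
Ẽ^† L^† R_ε L Ẽ = Ẽ^† R_ε Ẽ (here K = Kp + 1 ≥ 2). -/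
theorem statement16 (Kp : ℕ) (hKp : 1 ≤ Kp) (η : Fin Kp → ℝ) (ε : ℝ) :
    qf (Epad Kp η) (Rsingle Kp ε) (Epad Kp η) =
      (((4 : ℝ) ^ Kp * ∏ ι, Real.sin ((ε - η ι) / 2) ^ 2 : ℝ) : ℂ) ∧
    qf (Epad Kp η) ((Lmat (Kp + 1))ᴴ * Rsingle Kp ε * Lmat (Kp + 1)) (Epad Kp η) =
      qf (Epad Kp η) (Rsingle Kp ε) (Epad Kp η) := by
  constructor
  · rw [qf_Rsingle_self, ip_steer_Epad, norm_sq_ip_steer_Evec]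
  · rw [qf_conjTranspose_mul_mul, qf_Rsingle_self, qf_Rsingle_self,
      norm_ip_steer_Lmat_mulVec_Epad]
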